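/- arXiv:1004.3455 — 2 statements merged into one kernel-verified Lean document; each statement's English description precedes it below -/
import Mathlib

section
/- Let (α, μ) be a σ-finite measure space and f : α → α a measurable bijection with measurable inverse which preserves μ. Let U be a measurable set no point of which returns to U (for every x ∈ U and every j ≥ 1, f^[j](x) ∉ U), and let E be a measurable set with μ(E) < ∞. Then for μ-almost every x ∈ U, the set of times {j ∈ ℕ : f^[j](x) ∈ E} is finite. -/
open MeasureTheory Function Set

/-!
The preimages of a nonreturning set `U` under the iterates of `f` are pairwise disjoint. Pulling
`U ∩ f⁻ʲ E` back by `f ^ (n - j)` preserves its measure and turns it into `f⁻⁽ⁿ⁻ʲ⁾ U ∩ f⁻ⁿ E`, so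
for `j < n` these sets become disjoint pieces of the single set `f⁻ⁿ E`, whose measure is `μ E`.
Hence `∑ j, μ (U ∩ f⁻ʲ E) ≤ μ E < ∞`, and the Borel–Cantelli lemma applies.
-/

/-- A set is nonreturning for `f` if none of its points comes back to it under a positive iterate
of `f`; such sets are also called wandering. -/
def IsNonreturning {α : Type*} (f : α → α) (U : Set α) : Prop :=
  ∀ x ∈ U, ∀ j : ℕ, 1 ≤ j → f^[j] x ∉ U

namespace IsNonreturning

theorem pairwise_disjoint_preimage_iterate {α : Type*} {f : α → α} {U : Set α}
    (hU : IsNonreturning f U) : Pairwise (Disjoint on fun j : ℕ ↦ f^[j] ⁻¹' U) := by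
  refine (pairwise_disjoint_on _).2 fun i j hij ↦ disjoint_left.2 fun x hi hj ↦ ?_
  refine hU (f^[i] x) hi (j - i) (Nat.sub_pos_of_lt hij) ?_
  rwa [← iterate_add_apply, Nat.sub_add_cancel hij.le]

variable {α : Type*} [MeasurableSpace α] {μ : Measure α} {f : α → α} {U E : Set α}

theorem sum_measure_inter_preimage_iterate_le (hnr : IsNonreturning f U)
    (hf : MeasurePreserving f μ μ) (hU : NullMeasurableSet U μ) (hE : NullMeasurableSet E μ)
    (n : ℕ) : ∑ j ∈ Finset.range n, μ (U ∩ f^[j] ⁻¹' E) ≤ μ E := by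
  have hpre (k : ℕ) {s : Set α} (hs : NullMeasurableSet s μ) : NullMeasurableSet (f^[k] ⁻¹' s) μ :=
    hs.preimage (hf.iterate k).quasiMeasurePreserving
  have align : ∀ j ∈ Finset.range n,
      μ (U ∩ f^[j] ⁻¹' E) = μ (f^[n - j] ⁻¹' U ∩ f^[n] ⁻¹' E) := fun j hj ↦ by
    have hjn : j + (n - j) = n := Nat.add_sub_cancel' (Finset.mem_range.1 hj).le
    rw [← (hf.iterate (n - j)).measure_preimage (hU.inter (hpre j hE)), preimage_inter,
      ← preimage_comp, ← iterate_add, hjn]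
  have hdisj : (Finset.range n : Set ℕ).Pairwise
      (AEDisjoint μ on fun j ↦ f^[n - j] ⁻¹' U ∩ f^[n] ⁻¹' E) := fun i hi j hj hij ↦ by
    have hne : n - i ≠ n - j := by
      rw [Finset.mem_coe, Finset.mem_range] at hi hj
      omega
    exact ((hnr.pairwise_disjoint_preimage_iterate hne).mono
      inter_subset_left inter_subset_left).aedisjoint
  calc ∑ j ∈ Finset.range n, μ (U ∩ f^[j] ⁻¹' E)
      = ∑ j ∈ Finset.range n, μ (f^[n - j] ⁻¹' U ∩ f^[n] ⁻¹' E) := Finset.sum_congr rfl align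
    _ = μ (⋃ j ∈ Finset.range n, f^[n - j] ⁻¹' U ∩ f^[n] ⁻¹' E) :=
        (measure_biUnion_finset₀ hdisj fun j _ ↦ (hpre (n - j) hU).inter (hpre n hE)).symm
    _ ≤ μ (f^[n] ⁻¹' E) := measure_mono (iUnion₂_subset fun _ _ ↦ inter_subset_right)
    _ = μ E := (hf.iterate n).measure_preimage hE

theorem tsum_measure_inter_preimage_iterate_le (hnr : IsNonreturning f U)
    (hf : MeasurePreserving f μ μ) (hU : NullMeasurableSet U μ) (E : Set α) :
    ∑' j : ℕ, μ (U ∩ f^[j] ⁻¹' E) ≤ μ E := by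
  calc ∑' j : ℕ, μ (U ∩ f^[j] ⁻¹' E)
      ≤ ∑' j : ℕ, μ (U ∩ f^[j] ⁻¹' toMeasurable μ E) := by
        gcongr
        exact subset_toMeasurable μ E
    _ ≤ μ (toMeasurable μ E) :=
        ENNReal.tsum_le_of_sum_range_le <| hnr.sum_measure_inter_preimage_iterate_le hf hU
          (measurableSet_toMeasurable μ E).nullMeasurableSet
    _ = μ E := measure_toMeasurable E

end IsNonreturning

theorem windtree_nonreturning_finitely_many_visits_general
    {α : Type*} [MeasurableSpace α] {μ : Measure α} {f : α → α} {U E : Set α}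
    (hf : MeasurePreserving f μ μ) (hU : NullMeasurableSet U μ) (hE : μ E ≠ ⊤)
    (hnr : IsNonreturning f U) :
    ∀ᵐ x ∂μ, x ∈ U → {j : ℕ | f^[j] x ∈ E}.Finite := by
  have hsum : ∑' j : ℕ, μ (U ∩ f^[j] ⁻¹' E) ≠ ⊤ :=
    ne_top_of_le_ne_top hE (hnr.tsum_measure_inter_preimage_iterate_le hf hU E)
  filter_upwards [ae_finite_setOfPred_mem hsum] with x hx hxU
  exact hx.subset fun j hj ↦ ⟨hxU, hj⟩

/-- If no point of a measurable set `U` returns to `U` under a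
measure-preserving measurable bijection `f`, and `E` has finite measure, then for
μ-a.e. `x ∈ U`, the set of times `j` with `f^[j] x ∈ E` is finite. -/
theorem windtree_nonreturning_finitely_many_visits
    {α : Type*} [MeasurableSpace α] (μ : Measure α) [SigmaFinite μ]
    (f : α ≃ᵐ α) (hf : MeasurePreserving f μ μ)
    (U E : Set α) (hU : MeasurableSet U) (hE : MeasurableSet E) (hEfin : μ E < ⊤)
    (hnr : ∀ x ∈ U, ∀ j : ℕ, 1 ≤ j → (⇑f)^[j] x ∉ U) :
    ∀ᵐ x ∂μ, x ∈ U → {j : ℕ | (⇑f)^[j] x ∈ E}.Finite :=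
  windtree_nonreturning_finitely_many_visits_general hf hU.nullMeasurableSet hEfin.ne hnr
end

section
/- Let (α, μ) be a σ-finite measure space and f : α → α a measurable bijection with measurable inverse which preserves μ. Let D ⊆ E be measurable sets with μ(E) < ∞. Then the measure of the nonreturning part of D is at most the measure of the nonreturning part of E: μ({x ∈ D : ∀ j ≥ 1, f^[j](x) ∉ D}) ≤ μ({x ∈ E : ∀ j ≥ 1, f^[j](x) ∉ E}). -/
open MeasureTheory Function Set

/-!
Let `W` be the nonreturning part of `D`. Its preimages `f⁻ᵏ W` are pairwise disjoint, so for any `S`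
the sets `f⁻⁽ᴺ⁻ⁿ⁾ (W ∩ f⁻ⁿ S)`, `n < N`, are disjoint subsets of `f⁻ᴺ S`; since `f` preserves `μ`,
this gives `∑ₙ μ (W ∩ f⁻ⁿ S) ≤ μ S`. For `S = E` the sum is finite, and by Borel–Cantelli almost
every point of `W` visits `E` only finitely often. Its last visit lies in the nonreturning part `V`
of `E`, so `W` is covered up to a null set by the sets `W ∩ f⁻ⁿ V`, and the same inequality with
`S = V` bounds `μ W` by `μ V`.
-/

/-- The nonreturning part of `D`: the points of `D` whose forward orbit under `f` never meets `D`
again. It is phrased with `1 ≤ j` rather than `j + 1`, as in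
`windtree_nonreturning_measure_mono`. -/
def nonreturningPart {α : Type*} (f : α → α) (D : Set α) : Set α :=
  {x ∈ D | ∀ j : ℕ, 1 ≤ j → f^[j] x ∉ D}

section Dynamics

variable {α : Type*}

theorem pairwise_disjoint_preimage_iterate_nonreturningPart (f : α → α) (D : Set α) :
    Pairwise (Disjoint on fun n : ℕ ↦ f^[n] ⁻¹' nonreturningPart f D) := by
  refine (pairwise_disjoint_on _).2 fun m n hmn ↦ disjoint_left.2 fun x hm hn ↦ ?_
  refine hm.2 (n - m) (Nat.sub_pos_of_lt hmn) ?_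
  rw [← iterate_add_apply, Nat.sub_add_cancel hmn.le]
  exact hn.1

theorem exists_iterate_mem_nonreturningPart {f : α → α} {E : Set α} {x : α}
    (hfin : {n : ℕ | f^[n] x ∈ E}.Finite) (hvisit : ∃ n : ℕ, f^[n] x ∈ E) :
    ∃ n : ℕ, f^[n] x ∈ nonreturningPart f E := by
  obtain ⟨n, hn, hlast⟩ := exists_max_image _ id hfin hvisit
  refine ⟨n, hn, fun j hj hjE ↦ ?_⟩
  rw [← iterate_add_apply] at hjE
  have : j + n ≤ n := hlast (j + n) hjE
  omega

end Dynamics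

section Measure

variable {α : Type*} [MeasurableSpace α] {μ : Measure α} {f : α → α} {D E W S : Set α}

theorem nullMeasurableSet_nonreturningPart (hf : Measure.QuasiMeasurePreserving f μ μ)
    (hD : NullMeasurableSet D μ) : NullMeasurableSet (nonreturningPart f D) μ := by
  have : nonreturningPart f D = D ∩ ⋂ j : ℕ, ⋂ _ : 1 ≤ j, (f^[j] ⁻¹' D)ᶜ := by
    ext x; simp [nonreturningPart]
  rw [this]
  exact hD.inter <| .iInter fun j ↦ .iInter fun _ ↦ (hD.preimage (hf.iterate j)).compl

theorem tsum_measure_inter_preimage_iterate_le (hf : MeasurePreserving f μ μ)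
    (hW : NullMeasurableSet W μ) (hS : NullMeasurableSet S μ)
    (hdisj : Pairwise (Disjoint on fun n : ℕ ↦ f^[n] ⁻¹' W)) :
    ∑' n : ℕ, μ (W ∩ f^[n] ⁻¹' S) ≤ μ S := by
  refine ENNReal.tsum_le_of_sum_range_le fun N ↦ ?_
  let A (n : ℕ) : Set α := f^[N - n] ⁻¹' (W ∩ f^[n] ⁻¹' S)
  have hWS (n : ℕ) : NullMeasurableSet (W ∩ f^[n] ⁻¹' S) μ :=
    hW.inter (hS.preimage (hf.iterate n).quasiMeasurePreserving)
  have hA (n : ℕ) : NullMeasurableSet (A n) μ :=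
    (hWS n).preimage (hf.iterate (N - n)).quasiMeasurePreserving
  have hA_disj : (Finset.range N : Set ℕ).PairwiseDisjoint A := by
    intro m hm n hn hmn
    have hne : N - m ≠ N - n := by
      simp only [Finset.coe_range, mem_Iio] at hm hn
      omega
    exact (hdisj hne).mono (preimage_mono inter_subset_left) (preimage_mono inter_subset_left)
  have hA_subset : ⋃ n ∈ Finset.range N, A n ⊆ f^[N] ⁻¹' S := by
    refine iUnion₂_subset fun n hn x hx ↦ ?_
    have hxS : f^[n] (f^[N - n] x) ∈ S := hx.2
    rwa [← iterate_add_apply, Nat.add_sub_cancel' (Finset.mem_range.1 hn).le] at hxS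
  calc
    ∑ n ∈ Finset.range N, μ (W ∩ f^[n] ⁻¹' S)
    _ = ∑ n ∈ Finset.range N, μ (A n) :=
      Finset.sum_congr rfl fun n _ ↦ ((hf.iterate (N - n)).measure_preimage (hWS n)).symm
    _ = μ (⋃ n ∈ Finset.range N, A n) :=
      (measure_biUnion_finset₀ hA_disj.aedisjoint fun n _ ↦ hA n).symm
    _ ≤ μ (f^[N] ⁻¹' S) := measure_mono hA_subset
    _ = μ S := (hf.iterate N).measure_preimage hS

theorem ae_finite_setOf_iterate_mem (hf : MeasurePreserving f μ μ)
    (hW : NullMeasurableSet W μ) (hS : NullMeasurableSet S μ) (hS_fin : μ S ≠ ⊤)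
    (hdisj : Pairwise (Disjoint on fun n : ℕ ↦ f^[n] ⁻¹' W)) :
    ∀ᵐ x ∂μ, x ∈ W → {n : ℕ | f^[n] x ∈ S}.Finite := by
  have hsum : ∑' n : ℕ, μ (W ∩ f^[n] ⁻¹' S) ≠ ⊤ :=
    ne_top_of_le_ne_top hS_fin (tsum_measure_inter_preimage_iterate_le hf hW hS hdisj)
  filter_upwards [ae_finite_setOfPred_mem hsum] with x hx hxW
  exact hx.subset fun n hn ↦ ⟨hxW, hn⟩

theorem measure_le_of_ae_exists_iterate_mem (hf : MeasurePreserving f μ μ)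
    (hW : NullMeasurableSet W μ) (hS : NullMeasurableSet S μ)
    (hdisj : Pairwise (Disjoint on fun n : ℕ ↦ f^[n] ⁻¹' W))
    (hvisit : ∀ᵐ x ∂μ, x ∈ W → ∃ n : ℕ, f^[n] x ∈ S) :
    μ W ≤ μ S :=
  calc
    μ W ≤ μ (⋃ n : ℕ, W ∩ f^[n] ⁻¹' S) := by
      refine measure_mono_ae ?_
      filter_upwards [hvisit] with x hx hxW
      obtain ⟨n, hn⟩ := hx hxW
      exact mem_iUnion.2 ⟨n, hxW, hn⟩
    _ ≤ ∑' n : ℕ, μ (W ∩ f^[n] ⁻¹' S) := measure_iUnion_le _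
    _ ≤ μ S := tsum_measure_inter_preimage_iterate_le hf hW hS hdisj

theorem windtree_nonreturning_measure_mono_general (hf : MeasurePreserving f μ μ)
    (hD : NullMeasurableSet D μ) (hE : NullMeasurableSet E μ)
    (hvisit : ∀ᵐ x ∂μ, x ∈ D → ∃ n : ℕ, f^[n] x ∈ E) (hE_fin : μ E ≠ ⊤) :
    μ (nonreturningPart f D) ≤ μ (nonreturningPart f E) := by
  have hdisj := pairwise_disjoint_preimage_iterate_nonreturningPart f D
  have hW := nullMeasurableSet_nonreturningPart hf.quasiMeasurePreserving hD
  have hV := nullMeasurableSet_nonreturningPart hf.quasiMeasurePreserving hE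
  refine measure_le_of_ae_exists_iterate_mem hf hW hV hdisj ?_
  filter_upwards [hvisit, ae_finite_setOf_iterate_mem hf hW hE hE_fin hdisj] with x hxE hfin hxW
  exact exists_iterate_mem_nonreturningPart (hfin hxW) (hxE hxW.1)

end Measure

/-- For a measure-preserving measurable bijection `f` and measurable sets
`D ⊆ E` with `μ E < ∞`, the measure of the nonreturning part of `D` is at most the
measure of the nonreturning part of `E`. -/
theorem windtree_nonreturning_measure_mono
    {α : Type*} [MeasurableSpace α] (μ : Measure α) [SigmaFinite μ]
    (f : α ≃ᵐ α) (hf : MeasurePreserving f μ μ)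
    (D E : Set α) (hD : MeasurableSet D) (hE : MeasurableSet E)
    (hDE : D ⊆ E) (hEfin : μ E < ⊤) :
    μ {x ∈ D | ∀ j : ℕ, 1 ≤ j → (⇑f)^[j] x ∉ D} ≤
      μ {x ∈ E | ∀ j : ℕ, 1 ≤ j → (⇑f)^[j] x ∉ E} :=
  windtree_nonreturning_measure_mono_general hf hD.nullMeasurableSet hE.nullMeasurableSet
    (.of_forall fun _ hx ↦ ⟨0, hDE hx⟩) hEfin.ne
end
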